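/- Let Σ = Graph(u) be a smooth self-shrinker with f = 1/√(1+|Du|²) > 0 and g = log f. Then g satisfies Δ_Σ g − (1/2)⟨X, ∇_Σ g⟩ + |∇_Σ g|² + |A|² = 0 on Σ. -/

import Mathlib

open Real MeasureTheory Metric Filter
open scoped RealInnerProductSpace ENNReal NNReal

noncomputable section

abbrev E (n : ℕ) : Type := EuclideanSpace ℝ (Fin n)

variable {n : ℕ}

/-- `√(1 + |Du|²)`, the area element of the graph of `u`. -/
def aEl (u : E n → ℝ) (x : E n) : ℝ := Real.sqrt (1 + ‖gradient u x‖ ^ 2)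

/-- The vector field `Du/√(1+|Du|²)`. -/
def Vfield (u : E n → ℝ) (x : E n) : E n := (aEl u x)⁻¹ • gradient u x

/-- `div (Du/√(1+|Du|²))`. -/
def divV (u : E n → ℝ) (x : E n) : ℝ :=
  ∑ i, fderiv ℝ (fun y => Vfield u y i) x (EuclideanSpace.single i 1)

/-- The self-shrinker equation for an entire graph. -/
def ShrinkerEq (u : E n → ℝ) : Prop :=
  ∀ x, divV u x = (⟪x, gradient u x⟫ - u x) / (2 * aEl u x)

/-- The mean curvature of the graph of `u` with respect to the upward unit normal. -/
def meanCurv (u : E n → ℝ) (x : E n) : ℝ := -divV u x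

/-- The position vector `X = (x, u x)` of a point of the graph. -/
def Pos (u : E n → ℝ) (x : E n) : E (n + 1) :=
  (WithLp.equiv 2 (Fin (n + 1) → ℝ)).symm (Fin.snoc ((WithLp.equiv 2 (Fin n → ℝ)) x) (u x))

/-- The upward unit normal `n = (-Du, 1)/√(1+|Du|²)` at the point of the graph over `x`. -/
def NmlAt (u : E n → ℝ) (x : E n) : E (n + 1) :=
  (WithLp.equiv 2 (Fin (n + 1) → ℝ)).symm
    (Fin.snoc (fun i => -(Vfield u x i)) ((aEl u x)⁻¹))

/-- Projection of `ℝ^{n+1}` onto the first `n` coordinates. -/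
def projE (p : E (n + 1)) : E n :=
  (WithLp.equiv 2 (Fin n → ℝ)).symm fun i => p i.castSucc

/-- The unit normal of the graph, extended to `ℝ^{n+1}` independently of the last coordinate. -/
def Nml (u : E n → ℝ) (p : E (n + 1)) : E (n + 1) := NmlAt u (projE p)

/-- The inverse induced metric `g^{ij} = δ_{ij} - u_i u_j/(1+|Du|²)` of the graph. -/
def ginv (u : E n → ℝ) (x : E n) (i j : Fin n) : ℝ :=
  (if i = j then 1 else 0) - gradient u x i * gradient u x j / (aEl u x) ^ 2

/-- The Hessian `u_{ij}` of `u`. -/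
def hess (u : E n → ℝ) (x : E n) (i j : Fin n) : ℝ :=
  fderiv ℝ (fun y => gradient u y j) x (EuclideanSpace.single i 1)

/-- `|A|²`, the squared norm of the second fundamental form of the graph of `u`:
`|A|² = g^{ik} g^{jl} h_{ij} h_{kl}` with `h_{ij} = u_{ij}/√(1+|Du|²)`. -/
def A2 (u : E n → ℝ) (x : E n) : ℝ :=
  (∑ i, ∑ j, ∑ k, ∑ l, ginv u x i k * ginv u x j l * hess u x i j * hess u x k l) /
    (aEl u x) ^ 2

/-- Coordinate components `g^{ij} ∂_j f` of the tangential gradient. -/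
def gradCoord (u f : E n → ℝ) (x : E n) (i : Fin n) : ℝ :=
  ∑ j, ginv u x i j * gradient f x j

/-- The tangential gradient `∇_Σ f` (for `f` defined on the base, pulled back to the graph),
as a vector in `ℝ^{n+1}`. -/
def gradSigma (u f : E n → ℝ) (x : E n) : E (n + 1) :=
  (WithLp.equiv 2 (Fin (n + 1) → ℝ)).symm
    (Fin.snoc (fun i => gradCoord u f x i) (∑ i, gradient u x i * gradCoord u f x i))

/-- The Laplace–Beltrami operator of the graph:
`Δ_Σ f = (1/√g) ∂_i (√g g^{ij} ∂_j f)`. -/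
def lapSigma (u f : E n → ℝ) (x : E n) : ℝ :=
  (aEl u x)⁻¹ *
    ∑ i, fderiv ℝ (fun y => aEl u y * gradCoord u f y i) x (EuclideanSpace.single i 1)

/-- The tangential gradient `∇_Σ η` of an ambient function `η : ℝ^{n+1} → ℝ` along the graph:
the ambient gradient minus its normal component. -/
def gradSigmaAmb (u : E n → ℝ) (η : E (n + 1) → ℝ) (x : E n) : E (n + 1) :=
  gradient η (Pos u x) - ⟪gradient η (Pos u x), NmlAt u x⟫ • NmlAt u x

/-- `Vol(Σ ∩ B_R)`: the area of the part of the graph inside the ball of radius `R`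
in `ℝ^{n+1}`, computed by the area formula. -/
def sVol (u : E n → ℝ) (R : ℝ) : ℝ := ∫ x in {x : E n | ‖Pos u x‖ ≤ R}, aEl u x

/-- `M_R = sup_{|x| ≤ R} |u|`. -/
def supBall (u : E n → ℝ) (R : ℝ) : ℝ := ⨆ x : Metric.closedBall (0 : E n) R, |u x.1|

end

section

variable {n : ℕ}

/-- The partial derivative of `f` in the `i`-th coordinate direction. -/
noncomputable def pd (i : Fin n) (f : E n → ℝ) (x : E n) : ℝ :=
  fderiv ℝ f x (EuclideanSpace.single i 1)

theorem gradient_apply_eq_pd (f : E n → ℝ) (x : E n) (i : Fin n) :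
    gradient f x i = pd i f x := by
  have h := InnerProductSpace.toDual_symm_apply (𝕜 := ℝ)
    (x := EuclideanSpace.single i (1 : ℝ)) (y := fderiv ℝ f x)
  rw [EuclideanSpace.inner_single_right] at h
  simpa [pd, gradient] using h

theorem contDiff_pd {f : E n → ℝ} (hf : ContDiff ℝ (⊤ : ℕ∞) f) (i : Fin n) :
    ContDiff ℝ (⊤ : ℕ∞) (pd i f) :=
  (hf.fderiv_right (m := (⊤ : ℕ∞)) (by simp)).clm_apply contDiff_const

theorem pd_comm {f : E n → ℝ} (hf : ContDiff ℝ (⊤ : ℕ∞) f) (i j : Fin n) (x : E n) :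
    pd i (pd j f) x = pd j (pd i f) x := by
  have hd : DifferentiableAt ℝ (fderiv ℝ f) x :=
    (hf.fderiv_right (m := (⊤ : ℕ∞)) (by simp)).differentiable (by simp) x
  have key : ∀ k l : Fin n, pd k (pd l f) x =
      fderiv ℝ (fderiv ℝ f) x (EuclideanSpace.single k 1) (EuclideanSpace.single l 1) := by
    intro k l
    have h := (hd.hasFDerivAt.clm_apply
      (hasFDerivAt_const (EuclideanSpace.single l (1 : ℝ)) x)).fderiv
    unfold pd
    rw [h]
    simp
  rw [key, key]
  exact (hf.contDiffAt.isSymmSndFDerivAt (by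
    rw [minSmoothness_of_isRCLikeNormedField]
    exact WithTop.coe_le_coe.2 (le_top (a := (2 : ℕ∞))))) _ _

theorem pd_mul {f g : E n → ℝ} {x : E n} (hf : DifferentiableAt ℝ f x)
    (hg : DifferentiableAt ℝ g x) (i : Fin n) :
    pd i (fun y => f y * g y) x = pd i f x * g x + f x * pd i g x := by
  simp only [pd, fderiv_fun_mul hf hg]
  simp
  ring

theorem pd_sum {ι : Type*} (s : Finset ι) {f : ι → E n → ℝ} {x : E n}
    (hf : ∀ k ∈ s, DifferentiableAt ℝ (f k) x) (i : Fin n) :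
    pd i (fun y => ∑ k ∈ s, f k y) x = ∑ k ∈ s, pd i (f k) x := by
  simp [pd, fderiv_fun_sum hf]

theorem pd_neg (f : E n → ℝ) (x : E n) (i : Fin n) :
    pd i (fun y => -f y) x = -pd i f x := by
  simp [pd, fderiv_fun_neg]

theorem pd_coord (i j : Fin n) (x : E n) :
    pd i (fun y => y j) x = if j = i then 1 else 0 := by
  have h : (fun y : E n => y j) = (EuclideanSpace.proj j : E n →L[ℝ] ℝ) := by
    ext y; simp
  rw [pd, h, ContinuousLinearMap.fderiv]
  simp

/-- `q_i = ∑ₖ u_{ik} u_k`. -/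
noncomputable def hessGrad (u : E n → ℝ) (x : E n) (i : Fin n) : ℝ :=
  ∑ k, pd i (pd k u) x * pd k u x

/-- `D²u(Du, Du)`. -/
noncomputable def hessGradGrad (u : E n → ℝ) (x : E n) : ℝ :=
  ∑ i, pd i u x * hessGrad u x i

theorem aEl_pos (u : E n → ℝ) (x : E n) : 0 < aEl u x :=
  Real.sqrt_pos.2 (by positivity)

theorem aEl_eq (u : E n → ℝ) : aEl u = fun x => √(1 + ∑ i, pd i u x * pd i u x) := by
  ext x
  rw [aEl, EuclideanSpace.norm_sq_eq]
  simp [gradient_apply_eq_pd, pow_two]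

theorem aEl_sq (u : E n → ℝ) (x : E n) : aEl u x ^ 2 = 1 + ∑ i, pd i u x * pd i u x := by
  have : 0 ≤ ∑ i, pd i u x * pd i u x := Finset.sum_nonneg fun i _ => mul_self_nonneg _
  rw [aEl_eq, Real.sq_sqrt (by linarith)]

theorem contDiff_aEl {u : E n → ℝ} (hu : ContDiff ℝ (⊤ : ℕ∞) u) :
    ContDiff ℝ (⊤ : ℕ∞) (aEl u) := by
  rw [aEl_eq]
  refine ContDiff.sqrt (contDiff_const.add
    (ContDiff.sum fun i _ => (contDiff_pd hu i).mul (contDiff_pd hu i))) fun x => ?_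
  rw [← aEl_sq]
  exact (pow_pos (aEl_pos u x) 2).ne'

theorem pd_comp {φ : ℝ → ℝ} {φ' : ℝ} {f : E n → ℝ} {x : E n} (hφ : HasDerivAt φ φ' (f x))
    (hf : DifferentiableAt ℝ f x) (i : Fin n) :
    pd i (fun y => φ (f y)) x = φ' * pd i f x := by
  have h := (hφ.comp_hasFDerivAt x hf.hasFDerivAt).fderiv
  simp only [Function.comp_def] at h
  simp [pd, h]

theorem pd_aEl {u : E n → ℝ} (hu : ContDiff ℝ (⊤ : ℕ∞) u) (i : Fin n) (x : E n) :
    pd i (aEl u) x = hessGrad u x i / aEl u x := by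
  have hW := (contDiff_aEl hu).differentiable (by simp) x
  have hp : ∀ k, DifferentiableAt ℝ (pd k u) x := fun k =>
    (contDiff_pd hu k).differentiable (by simp) x
  have h1 : pd i (fun y => aEl u y * aEl u y) x =
      pd i (fun y => 1 + ∑ k, pd k u y * pd k u y) x := by
    congr 1
    ext y
    rw [← aEl_sq, sq]
  have h2 : pd i (fun y => 1 + ∑ k, pd k u y * pd k u y) x =
      pd i (fun y => ∑ k, pd k u y * pd k u y) x := by
    simp [pd, fderiv_const_add]
  rw [pd_mul hW hW, h2, pd_sum _ fun k _ => (hp k).fun_mul (hp k)] at h1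
  simp only [pd_mul (hp _) (hp _)] at h1
  rw [eq_div_iff (aEl_pos u x).ne', hessGrad]
  have h3 : ∑ k, (pd i (pd k u) x * pd k u x + pd k u x * pd i (pd k u) x) =
      2 * ∑ k, pd i (pd k u) x * pd k u x := by
    rw [Finset.mul_sum]
    exact Finset.sum_congr rfl fun k _ => by ring
  linarith

theorem pd_inv_aEl {u : E n → ℝ} (hu : ContDiff ℝ (⊤ : ℕ∞) u) (i : Fin n) (x : E n) :
    pd i (fun y => (aEl u y)⁻¹) x = -hessGrad u x i / aEl u x ^ 3 := by
  have hW := (aEl_pos u x).ne'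
  rw [pd_comp (hasDerivAt_inv hW) ((contDiff_aEl hu).differentiable (by simp) x), pd_aEl hu]
  field_simp

theorem pd_log_inv_aEl {u : E n → ℝ} (hu : ContDiff ℝ (⊤ : ℕ∞) u) (i : Fin n) (x : E n) :
    pd i (fun y => Real.log (aEl u y)⁻¹) x = -hessGrad u x i / aEl u x ^ 2 := by
  have hW := (aEl_pos u x).ne'
  have hd : DifferentiableAt ℝ (fun y => (aEl u y)⁻¹) x :=
    ((contDiff_aEl hu).differentiable (by simp) x).fun_inv hW
  rw [pd_comp (f := fun y => (aEl u y)⁻¹) (Real.hasDerivAt_log (inv_ne_zero hW)) hd,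
    pd_inv_aEl hu]
  field_simp

theorem Vfield_apply (u : E n → ℝ) (i : Fin n) :
    (fun y => Vfield u y i) = fun y => (aEl u y)⁻¹ * pd i u y := by
  ext y
  simp [Vfield, gradient_apply_eq_pd]

theorem contDiff_Vfield_apply {u : E n → ℝ} (hu : ContDiff ℝ (⊤ : ℕ∞) u) (i : Fin n) :
    ContDiff ℝ (⊤ : ℕ∞) fun y => Vfield u y i := by
  rw [Vfield_apply]
  exact ((contDiff_aEl hu).inv fun x => (aEl_pos u x).ne').mul (contDiff_pd hu i)

theorem pd_Vfield_apply {u : E n → ℝ} (hu : ContDiff ℝ (⊤ : ℕ∞) u) (i j : Fin n) (x : E n) :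
    pd j (fun y => Vfield u y i) x =
      pd i (pd j u) x / aEl u x - pd i u x * hessGrad u x j / aEl u x ^ 3 := by
  have hW := (aEl_pos u x).ne'
  rw [Vfield_apply, pd_mul (((contDiff_aEl hu).differentiable (by simp) x).fun_inv hW)
    ((contDiff_pd hu i).differentiable (by simp) x), pd_inv_aEl hu, pd_comm hu j i]
  field_simp
  ring

theorem sum_ginv_mul (u : E n → ℝ) (x : E n) (i : Fin n) (F : Fin n → ℝ) :
    ∑ j, ginv u x i j * F j = F i - pd i u x * (∑ j, pd j u x * F j) / aEl u x ^ 2 := by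
  simp only [ginv, gradient_apply_eq_pd, sub_mul, Finset.sum_sub_distrib, ite_mul, one_mul,
    zero_mul, Finset.sum_ite_eq, Finset.mem_univ, if_true]
  rw [Finset.mul_sum, Finset.sum_div]
  congr 1
  exact Finset.sum_congr rfl fun j _ => by ring

theorem gradCoord_log_inv_aEl {u : E n → ℝ} (hu : ContDiff ℝ (⊤ : ℕ∞) u) (i : Fin n) (x : E n) :
    gradCoord u (fun y => Real.log (aEl u y)⁻¹) x i =
      -(hessGrad u x i - pd i u x * hessGradGrad u x / aEl u x ^ 2) / aEl u x ^ 2 := by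
  have hs : ∑ j, pd j u x * (-hessGrad u x j / aEl u x ^ 2) =
      -hessGradGrad u x / aEl u x ^ 2 := by
    rw [hessGradGrad, ← Finset.sum_neg_distrib, Finset.sum_div]
    exact Finset.sum_congr rfl fun j _ => by ring
  simp only [gradCoord, gradient_apply_eq_pd, pd_log_inv_aEl hu, sum_ginv_mul, hs]
  ring

theorem hessGrad_eq (u : E n → ℝ) (i : Fin n) (x : E n) :
    ∑ j, pd j u x * pd i (pd j u) x = hessGrad u x i :=
  Finset.sum_congr rfl fun _ _ => mul_comm _ _

/-- The weighted gradient field of `log f` is `-D_{Du} (Du/√(1+|Du|²))`. -/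
theorem aEl_mul_gradCoord {u : E n → ℝ} (hu : ContDiff ℝ (⊤ : ℕ∞) u) (i : Fin n) (x : E n) :
    aEl u x * gradCoord u (fun y => Real.log (aEl u y)⁻¹) x i =
      -∑ j, pd j u x * pd j (fun y => Vfield u y i) x := by
  have hW := (aEl_pos u x).ne'
  have h : ∑ j, pd j u x * pd j (fun y => Vfield u y i) x =
      hessGrad u x i / aEl u x - pd i u x * hessGradGrad u x / aEl u x ^ 3 := by
    rw [← hessGrad_eq u, hessGradGrad, Finset.mul_sum, Finset.sum_div, Finset.sum_div,
      ← Finset.sum_sub_distrib]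
    exact Finset.sum_congr rfl fun j _ => by rw [pd_Vfield_apply hu]; ring
  rw [h, gradCoord_log_inv_aEl hu]
  field_simp

theorem divV_eq (u : E n → ℝ) : divV u = fun x => ∑ i, pd i (fun y => Vfield u y i) x := rfl

theorem lapSigma_log_inv_aEl {u : E n → ℝ} (hu : ContDiff ℝ (⊤ : ℕ∞) u) (x : E n) :
    lapSigma u (fun y => Real.log (aEl u y)⁻¹) x =
      -(aEl u x)⁻¹ * (∑ i, ∑ j, pd i (pd j u) x * pd j (fun y => Vfield u y i) x +
        ∑ j, pd j u x * pd j (divV u) x) := by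
  have hp : ∀ k, DifferentiableAt ℝ (pd k u) x := fun k =>
    (contDiff_pd hu k).differentiable (by simp) x
  have hV : ∀ i j, DifferentiableAt ℝ (pd j fun y => Vfield u y i) x := fun i j =>
    (contDiff_pd (contDiff_Vfield_apply hu i) j).differentiable (by simp) x
  have h1 : lapSigma u (fun y => Real.log (aEl u y)⁻¹) x = (aEl u x)⁻¹ *
      ∑ i, pd i (fun y => aEl u y * gradCoord u (fun y => Real.log (aEl u y)⁻¹) y i) x := rfl
  have h2 : ∀ i, pd i (fun y => ∑ j, pd j u y * pd j (fun y => Vfield u y i) y) x =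
      ∑ j, (pd i (pd j u) x * pd j (fun y => Vfield u y i) x +
        pd j u x * pd j (pd i (fun y => Vfield u y i)) x) := by
    intro i
    rw [pd_sum _ fun j _ => (hp j).fun_mul (hV i j)]
    exact Finset.sum_congr rfl fun j _ => by
      rw [pd_mul (hp j) (hV i j), pd_comm (contDiff_Vfield_apply hu i) i j]
  have h3 : ∑ j, pd j u x * pd j (divV u) x =
      ∑ i, ∑ j, pd j u x * pd j (pd i (fun y => Vfield u y i)) x := by
    rw [Finset.sum_comm]
    refine Finset.sum_congr rfl fun j _ => ?_
    rw [divV_eq, pd_sum _ fun i _ => hV i i, Finset.mul_sum]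
  rw [h1, h3]
  simp only [aEl_mul_gradCoord hu, pd_neg, h2, Finset.sum_add_distrib, Finset.sum_neg_distrib]
  ring

theorem inner_gradient_eq (u : E n → ℝ) (x : E n) :
    ⟪x, gradient u x⟫ = ∑ i, x i * pd i u x := by
  rw [PiLp.inner_apply]
  simp [gradient_apply_eq_pd, mul_comm]

theorem pd_divV {u : E n → ℝ} (hu : ContDiff ℝ (⊤ : ℕ∞) u) (hshr : ShrinkerEq u) (j : Fin n)
    (x : E n) :
    pd j (divV u) x = (∑ i, x i * pd j (pd i u) x) / (2 * aEl u x) -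
      (∑ i, x i * pd i u x - u x) * hessGrad u x j / (2 * aEl u x ^ 3) := by
  have hW := (aEl_pos u x).ne'
  have hp : ∀ k, DifferentiableAt ℝ (pd k u) x := fun k =>
    (contDiff_pd hu k).differentiable (by simp) x
  have hc : ∀ i, DifferentiableAt ℝ (fun y : E n => y i) x := fun i => by fun_prop
  have hud : DifferentiableAt ℝ u x := hu.differentiable (by simp) x
  have hi : DifferentiableAt ℝ (fun y => (aEl u y)⁻¹) x :=
    ((contDiff_aEl hu).differentiable (by simp) x).fun_inv hW
  have h0 : divV u = fun y => (∑ i, y i * pd i u y + -u y) * ((1 / 2) * (aEl u y)⁻¹) := by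
    ext y
    rw [hshr y, inner_gradient_eq]
    field_simp
    ring
  have hsum : DifferentiableAt ℝ (fun y : E n => ∑ i, y i * pd i u y) x := by fun_prop
  have hconst : pd j (fun y => (1 / 2) * (aEl u y)⁻¹) x =
      (1 / 2) * (-hessGrad u x j / aEl u x ^ 3) := by
    rw [← pd_inv_aEl hu, pd_mul (differentiableAt_const _) hi]
    simp [pd]
  have hadd : pd j (fun y => ∑ i, y i * pd i u y + -u y) x =
      pd j (fun y => ∑ i, y i * pd i u y) x + pd j (fun y => -u y) x := by
    rw [pd, fderiv_fun_add hsum hud.fun_neg]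
    rfl
  rw [h0, pd_mul (hsum.fun_add hud.fun_neg) (hi.const_mul _), hconst, hadd, pd_neg,
    pd_sum _ fun i _ => (hc i).fun_mul (hp i)]
  simp only [pd_mul (hc _) (hp _), pd_coord, Finset.sum_add_distrib, ite_mul, one_mul, zero_mul,
    Finset.sum_ite_eq', Finset.mem_univ, if_true]
  field_simp
  ring

theorem A2_eq {u : E n → ℝ} (hu : ContDiff ℝ (⊤ : ℕ∞) u) (x : E n) :
    A2 u x = (∑ i, ∑ j, pd i (pd j u) x ^ 2 - 2 * (∑ i, hessGrad u x i ^ 2) / aEl u x ^ 2 +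
      hessGradGrad u x ^ 2 / aEl u x ^ 4) / aEl u x ^ 2 := by
  have hh : ∀ i j, hess u x i j = pd i (pd j u) x := fun i j => by
    simp only [hess, gradient_apply_eq_pd]; rfl
  have hl : ∀ i j, ∑ k, ∑ l, ginv u x i k * ginv u x j l * hess u x i j * hess u x k l =
      pd i (pd j u) x * (pd i (pd j u) x - pd j u x * hessGrad u x i / aEl u x ^ 2 -
        pd i u x * (hessGrad u x j - pd j u x * hessGradGrad u x / aEl u x ^ 2) /
          aEl u x ^ 2) := by
    intro i j
    have h1 : ∀ k, ∑ l, ginv u x i k * ginv u x j l * hess u x i j * hess u x k l =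
        pd i (pd j u) x * (ginv u x i k *
          (pd k (pd j u) x - pd j u x * hessGrad u x k / aEl u x ^ 2)) := by
      intro k
      rw [← hessGrad_eq u k, ← sum_ginv_mul u x j fun l => pd k (pd l u) x, Finset.mul_sum,
        Finset.mul_sum]
      exact Finset.sum_congr rfl fun l _ => by rw [hh, hh]; ring
    have h2 : ∑ k, pd k u x * (pd k (pd j u) x - pd j u x * hessGrad u x k / aEl u x ^ 2) =
        hessGrad u x j - pd j u x * hessGradGrad u x / aEl u x ^ 2 := by
      rw [← hessGrad_eq u j, hessGradGrad, Finset.mul_sum, Finset.sum_div,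
        ← Finset.sum_sub_distrib]
      exact Finset.sum_congr rfl fun k _ => by rw [pd_comm hu k j]; ring
    simp only [h1]
    rw [← Finset.mul_sum, sum_ginv_mul, h2]
  have hq1 : ∑ i, ∑ j, pd i (pd j u) x * (pd j u x * hessGrad u x i) =
      ∑ i, hessGrad u x i ^ 2 := by
    refine Finset.sum_congr rfl fun i _ => ?_
    rw [sq]
    conv_rhs => arg 1; rw [hessGrad]
    rw [Finset.sum_mul]
    exact Finset.sum_congr rfl fun j _ => by ring
  have hq2 : ∑ i, ∑ j, pd i (pd j u) x * (pd i u x * hessGrad u x j) =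
      ∑ i, hessGrad u x i ^ 2 := by
    rw [← hq1, Finset.sum_comm]
    exact Finset.sum_congr rfl fun i _ => Finset.sum_congr rfl fun j _ => by rw [pd_comm hu]
  have hq3 : ∑ i, ∑ j, pd i (pd j u) x * (pd i u x * pd j u x) = hessGradGrad u x := by
    refine Finset.sum_congr rfl fun i _ => ?_
    rw [hessGrad, Finset.mul_sum]
    exact Finset.sum_congr rfl fun j _ => by ring
  rw [A2]
  congr 1
  simp only [hl]
  have hsplit : ∀ i j, pd i (pd j u) x *
      (pd i (pd j u) x - pd j u x * hessGrad u x i / aEl u x ^ 2 -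
        pd i u x * (hessGrad u x j - pd j u x * hessGradGrad u x / aEl u x ^ 2) /
          aEl u x ^ 2) =
      pd i (pd j u) x ^ 2 -
        pd i (pd j u) x * (pd j u x * hessGrad u x i) * (1 / aEl u x ^ 2) -
        pd i (pd j u) x * (pd i u x * hessGrad u x j) * (1 / aEl u x ^ 2) +
        pd i (pd j u) x * (pd i u x * pd j u x) * (hessGradGrad u x / aEl u x ^ 4) := by
    intro i j
    ring
  simp only [hsplit, Finset.sum_add_distrib, Finset.sum_sub_distrib, ← Finset.sum_mul, hq1, hq2,
    hq3]
  ring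

theorem sum_mul_gradCoord {u : E n → ℝ} (hu : ContDiff ℝ (⊤ : ℕ∞) u) (x : E n)
    (F : Fin n → ℝ) :
    ∑ i, F i * gradCoord u (fun y => Real.log (aEl u y)⁻¹) x i =
      -(∑ i, F i * hessGrad u x i - (∑ i, F i * pd i u x) * hessGradGrad u x / aEl u x ^ 2) /
        aEl u x ^ 2 := by
  simp only [gradCoord_log_inv_aEl hu]
  rw [Finset.sum_mul, Finset.sum_div, ← Finset.sum_sub_distrib, ← Finset.sum_neg_distrib,
    Finset.sum_div]
  exact Finset.sum_congr rfl fun i _ => by ring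

theorem sum_pd_mul_gradCoord {u : E n → ℝ} (hu : ContDiff ℝ (⊤ : ℕ∞) u) (x : E n) :
    ∑ i, pd i u x * gradCoord u (fun y => Real.log (aEl u y)⁻¹) x i =
      -hessGradGrad u x / aEl u x ^ 4 := by
  have hW := (aEl_pos u x).ne'
  have h : ∑ i, pd i u x * pd i u x = aEl u x ^ 2 - 1 := by rw [aEl_sq]; ring
  rw [sum_mul_gradCoord hu, h, ← hessGradGrad]
  field_simp
  ring

theorem inner_Pos_gradSigma {u : E n → ℝ} (hu : ContDiff ℝ (⊤ : ℕ∞) u) (x : E n) :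
    ⟪Pos u x, gradSigma u (fun y => Real.log (aEl u y)⁻¹) x⟫ =
      -(∑ i, x i * hessGrad u x i) / aEl u x ^ 2 +
        (∑ i, x i * pd i u x - u x) * hessGradGrad u x / aEl u x ^ 4 := by
  have h : ⟪Pos u x, gradSigma u (fun y => Real.log (aEl u y)⁻¹) x⟫ =
      ∑ i, x i * gradCoord u (fun y => Real.log (aEl u y)⁻¹) x i +
        u x * ∑ i, pd i u x * gradCoord u (fun y => Real.log (aEl u y)⁻¹) x i := by
    simp [PiLp.inner_apply, Fin.sum_univ_castSucc, Pos, gradSigma, gradient_apply_eq_pd, mul_comm]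
  rw [h, sum_pd_mul_gradCoord hu, sum_mul_gradCoord hu]
  ring

theorem norm_gradSigma_sq {u : E n → ℝ} (hu : ContDiff ℝ (⊤ : ℕ∞) u) (x : E n) :
    ‖gradSigma u (fun y => Real.log (aEl u y)⁻¹) x‖ ^ 2 =
      (∑ i, hessGrad u x i ^ 2 - hessGradGrad u x ^ 2 / aEl u x ^ 2) / aEl u x ^ 4 := by
  have hW := (aEl_pos u x).ne'
  have h : ‖gradSigma u (fun y => Real.log (aEl u y)⁻¹) x‖ ^ 2 =
      ∑ i, gradCoord u (fun y => Real.log (aEl u y)⁻¹) x i *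
          gradCoord u (fun y => Real.log (aEl u y)⁻¹) x i +
        (∑ i, pd i u x * gradCoord u (fun y => Real.log (aEl u y)⁻¹) x i) ^ 2 := by
    rw [EuclideanSpace.norm_sq_eq]
    simp [Fin.sum_univ_castSucc, gradSigma, gradient_apply_eq_pd, pow_two]
  have hq : ∑ i, gradCoord u (fun y => Real.log (aEl u y)⁻¹) x i * hessGrad u x i =
      -(∑ i, hessGrad u x i ^ 2 - hessGradGrad u x ^ 2 / aEl u x ^ 2) / aEl u x ^ 2 := by
    have := sum_mul_gradCoord hu x fun i => hessGrad u x i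
    simp only [mul_comm (gradCoord _ _ _ _)]
    rw [this]
    simp only [← sq, mul_comm (hessGrad _ _ _) (pd _ _ _)]
    rw [← hessGradGrad]
    ring
  have hp := sum_pd_mul_gradCoord hu x
  rw [h, sum_mul_gradCoord hu, hq, hp]
  simp only [mul_comm (pd _ _ _)] at hp
  rw [hp]
  field_simp
  ring

theorem sum_hess_mul_pd_Vfield {u : E n → ℝ} (hu : ContDiff ℝ (⊤ : ℕ∞) u) (x : E n) :
    ∑ i, ∑ j, pd i (pd j u) x * pd j (fun y => Vfield u y i) x =
      (∑ i, ∑ j, pd i (pd j u) x ^ 2) / aEl u x - (∑ i, hessGrad u x i ^ 2) / aEl u x ^ 3 := by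
  have hq : ∑ i, hessGrad u x i ^ 2 =
      ∑ i, ∑ j, pd i (pd j u) x * (pd i u x * hessGrad u x j) := by
    rw [Finset.sum_comm]
    refine Finset.sum_congr rfl fun j _ => ?_
    rw [sq]
    conv_lhs => arg 1; rw [hessGrad]
    rw [Finset.sum_mul]
    exact Finset.sum_congr rfl fun i _ => by rw [pd_comm hu j i]; ring
  rw [hq]
  simp only [Finset.sum_div, ← Finset.sum_sub_distrib]
  exact Finset.sum_congr rfl fun i _ => Finset.sum_congr rfl fun j _ => by
    rw [pd_Vfield_apply hu]; ring

theorem sum_pd_mul_pd_divV {u : E n → ℝ} (hu : ContDiff ℝ (⊤ : ℕ∞) u) (hshr : ShrinkerEq u)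
    (x : E n) :
    ∑ j, pd j u x * pd j (divV u) x = (∑ i, x i * hessGrad u x i) / (2 * aEl u x) -
      (∑ i, x i * pd i u x - u x) * hessGradGrad u x / (2 * aEl u x ^ 3) := by
  have h : ∑ i, x i * hessGrad u x i = ∑ j, pd j u x * ∑ i, x i * pd j (pd i u) x := by
    simp only [hessGrad, Finset.mul_sum]
    rw [Finset.sum_comm]
    exact Finset.sum_congr rfl fun j _ => Finset.sum_congr rfl fun i _ => by
      rw [pd_comm hu j i]; ring
  rw [h, hessGradGrad, Finset.mul_sum, Finset.sum_div, Finset.sum_div, ← Finset.sum_sub_distrib]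
  exact Finset.sum_congr rfl fun j _ => by rw [pd_divV hu hshr]; ring

end

/-- for a graphical self-shrinker, `g = log f` with `f = 1/√(1+|Du|²)`
satisfies `Δ_Σ g - (1/2)⟨X, ∇_Σ g⟩ + |∇_Σ g|² + |A|² = 0`. -/
theorem stmt_4 (n : ℕ) (u : E n → ℝ) (hu : ContDiff ℝ (⊤ : ℕ∞) u) (hshr : ShrinkerEq u) :
    ∀ x, lapSigma u (fun y => Real.log ((aEl u y)⁻¹)) x -
        (1 / 2) * ⟪Pos u x, gradSigma u (fun y => Real.log ((aEl u y)⁻¹)) x⟫ +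
        ‖gradSigma u (fun y => Real.log ((aEl u y)⁻¹)) x‖ ^ 2 + A2 u x = 0 := by
  intro x
  have hW := (aEl_pos u x).ne'
  rw [lapSigma_log_inv_aEl hu, inner_Pos_gradSigma hu, norm_gradSigma_sq hu, A2_eq hu,
    sum_hess_mul_pd_Vfield hu, sum_pd_mul_pd_divV hu hshr]
  field_simp
  ring
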